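/- For every complex number $s$ with $\Re s > 0$ and every positive integer $n$, there exists a constant $C$ (depending only on $s$) such that $\left|\sum_{k=1}^{n} k^{s} - \zeta(-s) - \frac{(n+\tfrac12)^{s+1}}{s+1}\right| \leq C\, n^{\Re s - 1}$. -/

import Mathlib

/-!
Let `b n` collect the Euler–Maclaurin boundary terms at `n` of `x ^ s` and its first `J`
derivatives. By Euler–Maclaurin on `[n, n + 1]`, the increments in `n` of
`n ^ (s + 1) - (s + 1) * (∑ k ≤ n, k ^ s - b n)` are `O(n ^ (re s - J - 1))`, locally uniformly
in `s`. On `re s < J` these entire functions of `s` therefore converge to an analytic function.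
For `re s < -1` the limit is visibly `-(s + 1) * ζ (-s)`, so by the identity theorem it is so
throughout `re s < J`. Summing the tail of the increments bounds the error of the
`n`-th approximation, and by Taylor's formula
`n ^ (s + 1) / (s + 1) + n ^ s / 2` differs from `(n + 1 / 2) ^ (s + 1) / (s + 1)` only by
`O(n ^ (re s - 1))`.
-/

open Filter Set Topology Asymptotics
open scoped Nat

section EulerMaclaurin

variable {E : Type*} [NormedAddCommGroup E] [NormedSpace ℝ E] [CompleteSpace E]

lemma integral_bernoulliFun_smul {g g' : ℝ → E}
    (hg : ∀ x ∈ Icc (0 : ℝ) 1, HasDerivAt g (g' x) x) (hg' : ContinuousOn g' (Icc 0 1)) (k : ℕ) :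
    ∫ x in (0 : ℝ)..1, bernoulliFun k x • g x =
      (k + 1 : ℝ)⁻¹ • (bernoulliFun (k + 1) 1 • g 1 - bernoulliFun (k + 1) 0 • g 0 -
        ∫ x in (0 : ℝ)..1, bernoulliFun (k + 1) x • g' x) := by
  rw [← uIcc_of_le zero_le_one] at hg hg'
  have hparts := intervalIntegral.integral_smul_deriv_eq_deriv_smul
    (fun x _ => antideriv_bernoulliFun k x) hg (intervalIntegrable_bernoulliFun k 0 1)
    hg'.intervalIntegrable
  simp only [div_eq_inv_mul, mul_smul, intervalIntegral.integral_smul] at hparts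
  rw [eq_sub_iff_add_eq', ← eq_sub_iff_add_eq] at hparts
  rw [hparts]
  module

theorem eulerMaclaurin_unitInterval {f : ℕ → ℝ → E} {J : ℕ}
    (hf : ∀ j ≤ J, ∀ x ∈ Icc (0 : ℝ) 1, HasDerivAt (f j) (f (j + 1) x) x)
    (hcont : ContinuousOn (f (J + 1)) (Icc 0 1)) :
    f 0 1 = (∫ x in (0 : ℝ)..1, f 0 x) +
      ∑ j ∈ Finset.range (J + 1), ((bernoulli' (j + 1) : ℝ) / (j + 1)!) • (f j 1 - f j 0) +
      ((-1 : ℝ) ^ J / (J + 1)!) • ∫ x in (0 : ℝ)..1, bernoulliFun (J + 1) x • f (J + 1) x := by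
  induction J with
  | zero =>
    have hparts := integral_bernoulliFun_smul (hf 0 le_rfl) hcont 0
    simp only [bernoulliFun_zero, zero_add, bernoulliFun_one, one_smul] at hparts
    simp only [hparts, zero_add, Finset.sum_range_one, bernoulli'_one, bernoulliFun_one]
    match_scalars <;> norm_num
  | succ J ih =>
    have hcont' : ContinuousOn (f (J + 1)) (Icc 0 1) := fun x hx =>
      (hf (J + 1) le_rfl x hx).continuousAt.continuousWithinAt
    have hzero : bernoulliFun (J + 2) 0 = bernoulli' (J + 2) := by
      rw [bernoulliFun_eval_zero, bernoulli_eq_bernoulli'_of_ne_one (by lia)]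
    have hone : bernoulliFun (J + 2) 1 = bernoulli' (J + 2) := by
      rw [bernoulliFun_endpoints_eq_of_ne_one (by lia), hzero]
    have hsign : (-1 : ℝ) ^ J * bernoulli' (J + 2) = bernoulli' (J + 2) := by
      have h : bernoulli (J + 2) = bernoulli' (J + 2) :=
        bernoulli_eq_bernoulli'_of_ne_one (by lia)
      rw [bernoulli, pow_add, neg_one_sq, mul_one] at h
      exact_mod_cast h
    have hfact : ((J + 2)! : ℝ) = (J + 2) * (J + 1)! := by
      exact_mod_cast Nat.factorial_succ (J + 1)
    rw [ih (fun j hj => hf j (hj.trans J.le_succ)) hcont', Finset.sum_range_succ _ (J + 1),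
      integral_bernoulliFun_smul (hf (J + 1) le_rfl) hcont, add_assoc J 1 1, one_add_one_eq_two,
      hzero, hone, hfact, pow_succ]
    push_cast
    rw [add_assoc (J : ℝ) 1 1, one_add_one_eq_two]
    have hJ : (J : ℝ) + 2 ≠ 0 := by positivity
    match_scalars <;> field_simp <;> rw [hsign]

end EulerMaclaurin

theorem tendsto_of_summable_norm_sub_of_eventually_tendsto {E : Type*} [NormedAddCommGroup E]
    [NormedSpace ℂ E] [CompleteSpace E] {U : Set ℂ} (hUo : IsOpen U) (hUc : IsPreconnected U)
    {F : ℕ → ℂ → E} {G : ℂ → E} (hF : ∀ n, DifferentiableOn ℂ (F n) U) (hG : DifferentiableOn ℂ G U)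
    (hsum : ∀ z ∈ U, ∃ u : ℕ → ℝ, Summable u ∧ ∀ᶠ w in 𝓝 z, ∀ n, ‖F (n + 1) w - F n w‖ ≤ u n)
    {z₀ : ℂ} (hz₀ : z₀ ∈ U) (hlim : ∀ᶠ z in 𝓝 z₀, Tendsto (F · z) atTop (𝓝 (G z)))
    {z : ℂ} (hz : z ∈ U) : Tendsto (F · z) atTop (𝓝 (G z)) := by
  let L : ℂ → E := fun w => F 0 w + ∑' n, (F (n + 1) w - F n w)
  have hFL : ∀ w ∈ U, Tendsto (F · w) atTop (𝓝 (L w)) := by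
    intro w hw
    obtain ⟨u, hu, hbound⟩ := hsum w hw
    have hs := (Summable.of_norm_bounded hu hbound.self_of_nhds).hasSum.tendsto_sum_nat
    refine (hs.const_add (F 0 w)).congr fun n => ?_
    rw [Finset.sum_range_sub (F · w), add_sub_cancel]
  have hLdiff : DifferentiableOn ℂ L U := by
    intro w hw
    obtain ⟨u, hu, hbound⟩ := hsum w hw
    obtain ⟨V, hV, hVo, hwV⟩ := eventually_nhds_iff.mp hbound
    have hdiff : DifferentiableOn ℂ (fun w => ∑' n, (F (n + 1) w - F n w)) (U ∩ V) :=
      Complex.differentiableOn_tsum_of_summable_norm hu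
        (fun n => ((hF (n + 1)).sub (hF n)).mono inter_subset_left) (hUo.inter hVo)
        (fun n w hw => hV w hw.2 n)
    exact (((hF 0).mono inter_subset_left).add hdiff).differentiableAt
      ((hUo.inter hVo).mem_nhds ⟨hw, hwV⟩) |>.differentiableWithinAt
  have hLG : L =ᶠ[𝓝 z₀] G := by
    filter_upwards [hlim, hUo.mem_nhds hz₀] with w hw hwU
    exact tendsto_nhds_unique (hFL w hwU) hw
  have hEq : EqOn L G U := (hLdiff.analyticOnNhd hUo).eqOn_of_preconnected_of_eventuallyEq
    (hG.analyticOnNhd hUo) hUc hz₀ hLG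
  exact hEq hz ▸ hFL z hz

theorem isBigO_sub_of_tendsto_of_isBigO_succ_sub {E : Type*} [SeminormedAddCommGroup E]
    {f : ℕ → E} {L : E} {a : ℝ} (ha : a ≤ 0) (hL : Tendsto f atTop (𝓝 L))
    (hf : (fun n => f (n + 1) - f n) =O[atTop] fun n : ℕ => (n : ℝ) ^ (a - 2)) :
    (fun n => f n - L) =O[atTop] fun n : ℕ => (n : ℝ) ^ a := by
  obtain ⟨C, hC, hbound⟩ := bound_of_isBigO_nat_atTop hf
  have hsum : Summable fun m : ℕ => ((m : ℝ) + 1) ^ (-2 : ℝ) := by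
    have hbase := Real.summable_nat_rpow.mpr (by norm_num : (-2 : ℝ) < -1)
    simpa using (summable_nat_add_iff 1).mpr hbase
  refine IsBigO.of_bound (C * ∑' m : ℕ, ((m : ℝ) + 1) ^ (-2 : ℝ)) ?_
  filter_upwards [eventually_gt_atTop 0] with n hn
  have hn' : (1 : ℝ) ≤ n := mod_cast hn
  have hstep : ∀ m : ℕ, dist (f (m + n)) (f (m + 1 + n)) ≤
      C * (n : ℝ) ^ a * ((m : ℝ) + 1) ^ (-2 : ℝ) := fun m => by
    have hmn : (0 : ℝ) < (m + n : ℕ) := by positivity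
    calc dist (f (m + n)) (f (m + 1 + n)) = ‖f (m + n + 1) - f (m + n)‖ := by
          rw [dist_comm, dist_eq_norm, add_right_comm]
      _ ≤ C * ((m + n : ℕ) : ℝ) ^ (a - 2) := by
          have hpos := Real.rpow_pos_of_pos hmn (a - 2)
          exact (hbound hpos.ne').trans_eq (by rw [Real.norm_of_nonneg hpos.le])
      _ = C * ((m + n : ℕ) : ℝ) ^ a * ((m + n : ℕ) : ℝ) ^ (-2 : ℝ) := by
          rw [sub_eq_add_neg, Real.rpow_add hmn, mul_assoc]
      _ ≤ C * (n : ℝ) ^ a * ((m : ℝ) + 1) ^ (-2 : ℝ) := by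
          gcongr ?_ * ?_ * ?_
          · exact Real.rpow_le_rpow_of_nonpos (by positivity) (by simp) ha
          · exact Real.rpow_le_rpow_of_nonpos (by positivity) (by push_cast; gcongr) (by norm_num)
  have htail := dist_le_tsum_of_dist_le_of_tendsto₀ _ hstep (hsum.mul_left _)
    ((tendsto_add_atTop_iff_nat n).mpr hL)
  rw [zero_add, dist_eq_norm, tsum_mul_left] at htail
  rw [Real.norm_of_nonneg (by positivity)]
  linarith

/-- The `j`-th derivative of `x ↦ x ^ s` on `(0, ∞)`, holomorphic in the exponent `s`. -/
noncomputable def cpowDeriv (j : ℕ) (s : ℂ) (x : ℝ) : ℂ :=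
  (descPochhammer ℂ j).eval s * (x : ℂ) ^ (s - j)

lemma cpowDeriv_zero (s : ℂ) (x : ℝ) : cpowDeriv 0 s x = (x : ℂ) ^ s := by
  simp [cpowDeriv]

lemma hasDerivAt_ofReal_cpow_const_of_pos {x : ℝ} (hx : 0 < x) (s : ℂ) :
    HasDerivAt (fun y : ℝ => (y : ℂ) ^ s) (s * (x : ℂ) ^ (s - 1)) x := by
  rcases eq_or_ne s 0 with rfl | hs
  · simpa using hasDerivAt_const x (1 : ℂ)
  · exact hasDerivAt_ofReal_cpow_const hx.ne' hs

lemma hasDerivAt_cpowDeriv (j : ℕ) (s : ℂ) {x : ℝ} (hx : 0 < x) :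
    HasDerivAt (cpowDeriv j s) (cpowDeriv (j + 1) s x) x := by
  convert! (hasDerivAt_ofReal_cpow_const_of_pos hx (s - j)).const_mul
    ((descPochhammer ℂ j).eval s) using 1
  rw [cpowDeriv, descPochhammer_succ_eval, Nat.cast_succ, sub_add_eq_sub_sub, mul_assoc]

lemma differentiable_cpowDeriv (j : ℕ) {x : ℝ} (hx : 0 < x) :
    Differentiable ℂ fun s => cpowDeriv j s x := by
  refine differentiable_descPochhammer_eval.mul fun s => ?_
  exact (differentiableAt_id.sub_const _).const_cpow (Or.inl (mod_cast hx.ne'))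

lemma norm_cpowDeriv (j : ℕ) (s : ℂ) {x : ℝ} (hx : 0 < x) :
    ‖cpowDeriv j s x‖ = ‖(descPochhammer ℂ j).eval s‖ * x ^ (s.re - j) := by
  simp [cpowDeriv, Complex.norm_cpow_eq_rpow_re_of_pos hx]

lemma continuousOn_cpowDeriv (j : ℕ) (s : ℂ) : ContinuousOn (cpowDeriv j s) (Ioi 0) :=
  fun _ hx => (hasDerivAt_cpowDeriv j s hx).continuousAt.continuousWithinAt

lemma add_one_mul_integral_ofReal_add_cpow (s : ℂ) {a : ℝ} (ha : 0 < a) :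
    (s + 1) * ∫ x in (0 : ℝ)..1, ((a + x : ℝ) : ℂ) ^ s =
      ((a + 1 : ℝ) : ℂ) ^ (s + 1) - (a : ℂ) ^ (s + 1) := by
  rw [intervalIntegral.integral_comp_add_left (fun x : ℝ => (x : ℂ) ^ s), add_zero]
  rcases eq_or_ne s (-1) with rfl | hs
  · simp
  have hzero : (0 : ℝ) ∉ uIcc a (a + 1) := notMem_uIcc_of_lt ha (by linarith)
  rw [integral_cpow (Or.inr ⟨hs, hzero⟩), mul_div_cancel₀ _ (by rwa [Ne, add_eq_zero_iff_eq_neg])]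

/-- The boundary terms at `n` in the Euler–Maclaurin expansion of `∑ k ≤ n, k ^ s`, up to the
`J`-th Bernoulli number; `bernoulli'` takes the value `1 / 2` at `1`, so that the term `j = 0` is
`n ^ s / 2`. -/
noncomputable def boundaryTerms (J n : ℕ) (s : ℂ) : ℂ :=
  ∑ j ∈ Finset.range J, (bernoulli' (j + 1) / (j + 1)! : ℂ) * cpowDeriv j s n

/-- The Euler–Maclaurin approximation of `(-s - 1) * ζ (-s)` obtained from the first `n` terms.
The factor `-s - 1` clears the pole at `s = -1`, which makes it an entire function of `s`. -/
noncomputable def zetaApprox (J n : ℕ) (s : ℂ) : ℂ :=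
  (n : ℂ) ^ (s + 1) - (s + 1) * (∑ k ∈ Finset.Icc 1 n, (k : ℂ) ^ s - boundaryTerms J n s)

lemma zetaApprox_succ_sub (J : ℕ) {n : ℕ} (hn : 0 < n) (s : ℂ) :
    zetaApprox (J + 1) (n + 1) s - zetaApprox (J + 1) n s =
      -(s + 1) * ((-1) ^ J / (J + 1)!) *
        ∫ x in (0 : ℝ)..1, bernoulliFun (J + 1) x • cpowDeriv (J + 1) s (n + x) := by
  have hpos : ∀ x ∈ Icc (0 : ℝ) 1, 0 < n + x := fun x hx =>
    add_pos_of_pos_of_nonneg (mod_cast hn) hx.1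
  have hEM := eulerMaclaurin_unitInterval (J := J) (f := fun j x => cpowDeriv j s (n + x))
    (fun j _ x hx => (hasDerivAt_cpowDeriv j s (hpos x hx)).comp_const_add _ _)
    ((continuousOn_cpowDeriv _ s).comp (by fun_prop) hpos)
  simp only [cpowDeriv_zero, Complex.real_smul, smul_sub, Finset.sum_sub_distrib] at hEM
  have hint := add_one_mul_integral_ofReal_add_cpow s (a := n) (mod_cast hn)
  simp only [zetaApprox, boundaryTerms, Finset.sum_Icc_succ_top (Nat.le_add_left 1 n),
    Complex.real_smul]
  push_cast at hEM hint ⊢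
  simp only [add_zero] at hEM
  linear_combination -(s + 1) * hEM - hint

lemma differentiable_zetaApprox (J : ℕ) {n : ℕ} (hn : 0 < n) :
    Differentiable ℂ (zetaApprox J n) := by
  have hcpow : ∀ k : ℕ, 0 < k → Differentiable ℂ fun s : ℂ => (k : ℂ) ^ s := fun k hk s =>
    differentiableAt_id.const_cpow (Or.inl (mod_cast hk.ne'))
  have hsum : Differentiable ℂ fun s : ℂ => ∑ k ∈ Finset.Icc 1 n, (k : ℂ) ^ s :=
    Differentiable.fun_sum fun k hk => hcpow k (Finset.mem_Icc.mp hk).1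
  have hboundary : Differentiable ℂ (boundaryTerms J n) := Differentiable.fun_sum fun j _ =>
    (differentiable_cpowDeriv j (mod_cast hn)).const_mul _
  exact ((hcpow n hn).comp (differentiable_id.add_const 1)).sub
    ((differentiable_id.add_const 1).mul (hsum.sub hboundary))

lemma exists_norm_zetaApprox_succ_sub_le (J : ℕ) : ∃ M : ℝ, 0 ≤ M ∧ ∀ (s : ℂ) (n : ℕ),
    s.re ≤ J + 1 → 0 < n → ‖zetaApprox (J + 1) (n + 1) s - zetaApprox (J + 1) n s‖ ≤
      M * ‖(s + 1) * (descPochhammer ℂ (J + 1)).eval s‖ * (n : ℝ) ^ (s.re - (J + 1)) := by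
  obtain ⟨B, hB⟩ := isCompact_Icc.exists_bound_of_continuousOn (s := Icc (0 : ℝ) 1)
    (continuous_bernoulliFun (J + 1)).continuousOn
  have hB₀ : 0 ≤ B := (norm_nonneg _).trans (hB 0 (by simp))
  refine ⟨B / (J + 1)!, by positivity, fun s n hs hn => ?_⟩
  have hn' : (0 : ℝ) < n := mod_cast hn
  have hpoint : ∀ x ∈ uIoc (0 : ℝ) 1,
      ‖bernoulliFun (J + 1) x • cpowDeriv (J + 1) s (n + x)‖ ≤
        B * (‖(descPochhammer ℂ (J + 1)).eval s‖ * (n : ℝ) ^ (s.re - (J + 1))) := fun x hx => by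
    rw [uIoc_of_le zero_le_one] at hx
    have hnx : 0 < n + x := add_pos hn' hx.1
    rw [norm_smul, norm_cpowDeriv _ _ hnx, Nat.cast_succ]
    have hrpow : ((n : ℝ) + x) ^ (s.re - (J + 1)) ≤ (n : ℝ) ^ (s.re - (J + 1)) :=
      Real.rpow_le_rpow_of_nonpos hn' (by linarith [hx.1]) (by linarith)
    have hBx := hB x (Ioc_subset_Icc_self hx)
    gcongr
  have hint := intervalIntegral.norm_integral_le_of_norm_le_const hpoint
  rw [sub_zero, abs_one, mul_one] at hint
  rw [zetaApprox_succ_sub J hn]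
  calc
    _ = ‖s + 1‖ / (J + 1)! *
        ‖∫ x in (0 : ℝ)..1, bernoulliFun (J + 1) x • cpowDeriv (J + 1) s (n + x)‖ := by
      rw [norm_mul, norm_mul, norm_neg, norm_div]
      simp [div_eq_mul_inv]
    _ ≤ ‖s + 1‖ / (J + 1)! *
        (B * (‖(descPochhammer ℂ (J + 1)).eval s‖ * (n : ℝ) ^ (s.re - (J + 1)))) := by gcongr
    _ = _ := by rw [norm_mul]; ring

lemma isBigO_natCast_cpow (s : ℂ) :
    (fun n : ℕ => (n : ℂ) ^ s) =O[atTop] fun n => (n : ℝ) ^ s.re :=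
  IsBigO.of_norm_eventuallyLE <| (eventually_gt_atTop 0).mono fun _ hn =>
    (Complex.norm_natCast_cpow_of_pos hn s).le

lemma isBigO_natCast_rpow_of_le {a b : ℝ} (hab : a ≤ b) :
    (fun n : ℕ => (n : ℝ) ^ a) =O[atTop] fun n => (n : ℝ) ^ b :=
  IsBigO.of_norm_eventuallyLE <| (eventually_ge_atTop 1).mono fun n hn => by
    dsimp only
    rw [Real.norm_rpow_of_nonneg (by positivity), Real.norm_natCast]
    exact Real.rpow_le_rpow_of_exponent_le (mod_cast hn) hab

lemma tendsto_natCast_rpow_neg {a : ℝ} (ha : a < 0) :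
    Tendsto (fun n : ℕ => (n : ℝ) ^ a) atTop (𝓝 0) := by
  simpa [Function.comp_def] using
    (tendsto_rpow_neg_atTop (neg_pos.mpr ha)).comp tendsto_natCast_atTop_atTop

lemma tendsto_natCast_cpow_of_re_neg {s : ℂ} (hs : s.re < 0) :
    Tendsto (fun n : ℕ => (n : ℂ) ^ s) atTop (𝓝 0) :=
  (isBigO_natCast_cpow s).trans_tendsto (tendsto_natCast_rpow_neg hs)

lemma isBigO_cpowDeriv (j : ℕ) (s : ℂ) :
    (fun n : ℕ => cpowDeriv j s n) =O[atTop] fun n => (n : ℝ) ^ (s.re - j) := by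
  simpa [cpowDeriv] using (isBigO_natCast_cpow (s - j)).const_mul_left
    ((descPochhammer ℂ j).eval s)

lemma isBigO_boundaryTerms (J : ℕ) (s : ℂ) :
    (fun n => boundaryTerms J n s) =O[atTop] fun n => (n : ℝ) ^ s.re :=
  IsBigO.fun_sum fun j _ => ((isBigO_cpowDeriv j s).trans
    (isBigO_natCast_rpow_of_le (by simp))).const_mul_left _

lemma isBigO_boundaryTerms_sub (J : ℕ) (s : ℂ) :
    (fun n : ℕ => boundaryTerms (J + 1) n s - (n : ℂ) ^ s / 2) =O[atTop]
      fun n => (n : ℝ) ^ (s.re - 1) := by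
  have hterms : (fun n : ℕ => boundaryTerms (J + 1) n s - (n : ℂ) ^ s / 2) = fun n : ℕ =>
      ∑ j ∈ Finset.range J, (bernoulli' (j + 2) / (j + 2)! : ℂ) * cpowDeriv (j + 1) s n := by
    ext n
    simp only [boundaryTerms, Finset.sum_range_succ', zero_add, bernoulli'_one, Nat.factorial_one,
      Nat.cast_one, div_one, cpowDeriv_zero, Complex.ofReal_natCast]
    push_cast
    ring
  rw [hterms]
  exact IsBigO.fun_sum fun j _ => ((isBigO_cpowDeriv (j + 1) s).trans
    (isBigO_natCast_rpow_of_le (by simp))).const_mul_left _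

lemma tendsto_sum_natCast_cpow {s : ℂ} (hs : s.re < -1) :
    Tendsto (fun n : ℕ => ∑ k ∈ Finset.Icc 1 n, (k : ℂ) ^ s) atTop (𝓝 (riemannZeta (-s))) := by
  have hs' : 1 < (-s).re := by rw [Complex.neg_re]; linarith
  have hsum := (summable_nat_add_iff 1).mpr (Complex.summable_one_div_nat_cpow.mpr hs')
  rw [zeta_eq_tsum_one_div_nat_add_one_cpow hs']
  push_cast at hsum
  refine hsum.hasSum.tendsto_sum_nat.congr fun n => ?_
  have hshift := Finset.sum_Ico_add' (fun k : ℕ => (k : ℂ) ^ s) 0 n 1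
  rw [← Finset.Ico_add_one_right_eq_Icc, Finset.range_eq_Ico, ← hshift]
  simp [Complex.cpow_neg]

lemma tendsto_zetaApprox_of_re_lt_neg_one (J : ℕ) {s : ℂ} (hs : s.re < -1) :
    Tendsto (zetaApprox J · s) atTop (𝓝 (riemannZeta₁ (-s))) := by
  have hs₁ : -s ≠ 1 := by
    intro h
    simp [neg_eq_iff_eq_neg.mp h] at hs
  have hboundary : Tendsto (boundaryTerms J · s) atTop (𝓝 0) :=
    (isBigO_boundaryTerms J s).trans_tendsto (tendsto_natCast_rpow_neg (by linarith))
  have hpow : Tendsto (fun n : ℕ => (n : ℂ) ^ (s + 1)) atTop (𝓝 0) :=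
    tendsto_natCast_cpow_of_re_neg (by simpa using by linarith)
  have hlimit : riemannZeta₁ (-s) = 0 - (s + 1) * (riemannZeta (-s) - 0) := by
    rw [riemannZeta_eq_inv_sub_mul hs₁]
    field_simp [sub_ne_zero.mpr hs₁]
    ring
  rw [hlimit]
  exact hpow.sub (((tendsto_sum_natCast_cpow hs).sub hboundary).const_mul (s + 1))

theorem tendsto_zetaApprox {J : ℕ} {s : ℂ} (hs : s.re < J) :
    Tendsto (zetaApprox (J + 1) · s) atTop (𝓝 (riemannZeta₁ (-s))) := by
  obtain ⟨M, hM, hbound⟩ := exists_norm_zetaApprox_succ_sub_le J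
  let P : ℂ → ℝ := fun w => ‖(w + 1) * (descPochhammer ℂ (J + 1)).eval w‖
  have hP : Continuous P :=
    ((continuous_id.add_const 1).mul (Polynomial.continuous _)).norm
  have hsum : ∀ z ∈ {w : ℂ | w.re < J}, ∃ u : ℕ → ℝ, Summable u ∧ ∀ᶠ w in 𝓝 z, ∀ n,
      ‖zetaApprox (J + 1) (n + 1 + 1) w - zetaApprox (J + 1) (n + 1) w‖ ≤ u n := by
    intro z hz
    obtain ⟨c, hzc, hcJ⟩ : ∃ c, z.re < c ∧ c < J := exists_between hz
    have hu : Summable fun n : ℕ => ((n + 1 : ℕ) : ℝ) ^ (c - (J + 1)) :=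
      (summable_nat_add_iff 1).mpr (Real.summable_nat_rpow.mpr (by linarith))
    refine ⟨_, hu.mul_left (M * (P z + 1)), ?_⟩
    filter_upwards [Complex.continuous_re.continuousAt.eventually_lt_const hzc,
      hP.continuousAt.eventually_lt_const (lt_add_one (P z))] with w hwc hwP n
    refine (hbound w (n + 1) (by linarith) n.succ_pos).trans ?_
    gcongr
    exact mod_cast n.succ_pos
  have hz₀ : (-2 : ℂ).re < J := (by norm_num : (-2 : ℂ).re < 0).trans_le J.cast_nonneg
  refine (tendsto_add_atTop_iff_nat 1).mp <|
    tendsto_of_summable_norm_sub_of_eventually_tendsto (z₀ := -2)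
      (isOpen_lt Complex.continuous_re continuous_const)
      (convex_halfSpace_re_lt _).isPreconnected (F := fun n => zetaApprox (J + 1) (n + 1))
      (fun n => (differentiable_zetaApprox (J + 1) n.succ_pos).differentiableOn)
      (differentiable_riemannZeta₁.comp differentiable_neg).differentiableOn hsum hz₀ ?_ hs
  filter_upwards [Complex.continuous_re.continuousAt.eventually_lt_const
    (by norm_num : (-2 : ℂ).re < -1)] with w hw
  exact (tendsto_add_atTop_iff_nat 1).mpr (tendsto_zetaApprox_of_re_lt_neg_one (J + 1) hw)

theorem isBigO_zetaApprox_sub {J : ℕ} {s : ℂ} (hs : s.re + 1 ≤ J) :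
    (fun n : ℕ => zetaApprox (J + 1) n s - riemannZeta₁ (-s)) =O[atTop]
      fun n => (n : ℝ) ^ (s.re + 1 - J) := by
  obtain ⟨M, -, hbound⟩ := exists_norm_zetaApprox_succ_sub_le J
  refine isBigO_sub_of_tendsto_of_isBigO_succ_sub (by linarith)
    (tendsto_zetaApprox (by linarith)) ?_
  refine IsBigO.of_bound (M * ‖(s + 1) * (descPochhammer ℂ (J + 1)).eval s‖) ?_
  filter_upwards [eventually_gt_atTop 0] with n hn
  rw [Real.norm_of_nonneg (by positivity), show s.re + 1 - J - 2 = s.re - (J + 1) by ring]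
  exact hbound s n (by linarith) hn

theorem isBigO_sum_cpow_sub_zeta_sub {s : ℂ} (hs : s ≠ -1) :
    (fun n : ℕ => ∑ k ∈ Finset.Icc 1 n, (k : ℂ) ^ s - riemannZeta (-s) -
      ((n : ℂ) ^ (s + 1) / (s + 1) + (n : ℂ) ^ s / 2)) =O[atTop]
        fun n => (n : ℝ) ^ (s.re - 1) := by
  have hs₁ : s + 1 ≠ 0 := by rwa [Ne, add_eq_zero_iff_eq_neg]
  have hs₂ : -s ≠ 1 := by rwa [Ne, neg_eq_iff_eq_neg]
  obtain ⟨J, hJ₂, hJ⟩ : ∃ J : ℕ, 2 ≤ J ∧ s.re + 1 ≤ J := by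
    obtain ⟨m, hm⟩ := exists_nat_ge (s.re + 1)
    exact ⟨max 2 m, le_max_left _ _, hm.trans (mod_cast le_max_right _ _)⟩
  have hJ₂' : (2 : ℝ) ≤ J := mod_cast hJ₂
  have hzeta := ((isBigO_zetaApprox_sub hJ).trans
    (isBigO_natCast_rpow_of_le (by linarith : _ ≤ s.re - 1))).const_mul_left (-(s + 1)⁻¹)
  refine (hzeta.add (isBigO_boundaryTerms_sub J s)).congr_left fun n => ?_
  rw [riemannZeta_eq_inv_sub_mul hs₂, zetaApprox, show -s - 1 = -(s + 1) by ring]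
  field_simp
  ring

lemma isBigO_one_add_cpow_sub (a : ℂ) :
    (fun z : ℂ => (1 + z) ^ a - (1 + a * z)) =O[𝓝 0] fun z => ‖z‖ ^ 2 := by
  have h := (Complex.one_add_cpow_hasFPowerSeriesAt_zero (a := a)).isBigO_sub_partialSum_pow 2
  simpa [FormalMultilinearSeries.partialSum, Finset.sum_range_succ, binomialSeries,
    mul_comm] using h

lemma isBigO_natCast_add_cpow_sub (a : ℂ) {c : ℝ} (hc : 0 ≤ c) :
    (fun n : ℕ => ((n : ℂ) + c) ^ a - ((n : ℂ) ^ a + a * c * (n : ℂ) ^ (a - 1))) =O[atTop]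
      fun n => (n : ℝ) ^ (a.re - 2) := by
  have hlim : Tendsto (fun n : ℕ => (c : ℂ) / n) atTop (𝓝 0) := by
    simpa using tendsto_const_div_atTop_nhds_zero_nat (𝕜 := ℂ) c
  have htaylor := (isBigO_natCast_cpow a).mul ((isBigO_one_add_cpow_sub a).comp_tendsto hlim)
  refine (htaylor.congr' ?_ ?_).trans (isBigO_const_mul_self (c ^ 2) _ _)
  · filter_upwards [eventually_gt_atTop 0] with n hn
    have hn' : (n : ℂ) ≠ 0 := mod_cast hn.ne'
    have hfactor : ((n : ℂ) + c) ^ a = (n : ℂ) ^ a * (1 + c / n) ^ a := by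
      have h := Complex.mul_cpow_ofReal_nonneg (a := n) (b := 1 + c / n) (by positivity)
        (by positivity) a
      push_cast at h
      rw [← h, mul_one_add, mul_div_cancel₀ _ hn']
    rw [Function.comp_apply, hfactor, Complex.cpow_sub _ _ hn', Complex.cpow_one]
    ring
  · filter_upwards [eventually_gt_atTop 0] with n hn
    have hn' : (0 : ℝ) < n := mod_cast hn
    simp only [Function.comp_apply]
    rw [norm_div, Complex.norm_real, Complex.norm_natCast, div_pow, Real.norm_eq_abs, sq_abs,
      Real.rpow_sub hn', Real.rpow_two]
    ring

theorem isBigO_sum_cpow_sub_zeta_sub_midpoint {s : ℂ} (hs : s ≠ -1) :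
    (fun n : ℕ => ∑ k ∈ Finset.Icc 1 n, (k : ℂ) ^ s - riemannZeta (-s) -
      ((n : ℂ) + 1 / 2) ^ (s + 1) / (s + 1)) =O[atTop] fun n => (n : ℝ) ^ (s.re - 1) := by
  have hs₁ : s + 1 ≠ 0 := by rwa [Ne, add_eq_zero_iff_eq_neg]
  have hmid : (fun n : ℕ => ((n : ℂ) + 1 / 2) ^ (s + 1) -
      ((n : ℂ) ^ (s + 1) + (s + 1) * (1 / 2) * (n : ℂ) ^ s)) =O[atTop]
        fun n => (n : ℝ) ^ (s.re - 1) := by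
    have h := isBigO_natCast_add_cpow_sub (s + 1) (c := 1 / 2) (by norm_num)
    rw [Complex.add_re, Complex.one_re, show s.re + 1 - 2 = s.re - 1 by ring] at h
    simpa using h
  refine ((isBigO_sum_cpow_sub_zeta_sub hs).sub (hmid.const_mul_left (s + 1)⁻¹)).congr_left
    fun n => ?_
  field_simp
  ring

theorem euler_maclaurin_estimate_general (s : ℂ) (hs : s ≠ -1) :
    ∃ C : ℝ, ∀ n : ℕ, 0 < n →
      ‖(∑ k ∈ Finset.Icc 1 n, (k : ℂ) ^ s) - riemannZeta (-s) -
          ((n : ℂ) + 1 / 2) ^ (s + 1) / (s + 1)‖ ≤ C * (n : ℝ) ^ (s.re - 1) := by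
  obtain ⟨C, -, hC⟩ := bound_of_isBigO_nat_atTop (isBigO_sum_cpow_sub_zeta_sub_midpoint hs)
  refine ⟨C, fun n hn => ?_⟩
  have hpos : 0 < (n : ℝ) ^ (s.re - 1) := Real.rpow_pos_of_pos (mod_cast hn) _
  simpa only [Real.norm_of_nonneg hpos.le] using hC hpos.ne'

theorem euler_maclaurin_estimate (s : ℂ) (hs : 0 < s.re) :
    ∃ C : ℝ, ∀ n : ℕ, 0 < n →
      ‖(∑ k ∈ Finset.Icc 1 n, (k : ℂ) ^ s) - riemannZeta (-s) -
          ((n : ℂ) + 1 / 2) ^ (s + 1) / (s + 1)‖ ≤ C * (n : ℝ) ^ (s.re - 1) :=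
  euler_maclaurin_estimate_general s <| by rintro rfl; norm_num at hs
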